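/- For every k ≥ 2 and every n ≥ d − 1, the associated polynomials satisfy S_n^{[k]}(z) = (z − β_{k−2}) · S_{n+1}^{[k−1]}(z) − α²_{k−2} · S_{n+2}^{[k−2]}(z) identically in z, where β_m and α_m are the coefficients of the three-term recurrence Q_{m+1}(z) = (z − β_m) Q_m(z) − α_m² Q_{m−1}(z) of the monic orthogonal polynomials Q_m with respect to μ_ρ (with Q_{−1}=0, Q_0=1 and α_0² = ∫_{−1}^{1} dμ_ρ). -/

import Mathlib

open MeasureTheory Polynomial Filter
open scoped Classical

noncomputable section

/-- The discrete Sobolev inner product with a single derivative order `d j` at each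
mass point `c j`, with weight `η j`. -/
def sobInner (μ : Measure ℝ) {N : ℕ} (c : Fin N → ℝ) (d : Fin N → ℕ) (η : Fin N → ℝ)
    (f g : Polynomial ℝ) : ℝ :=
  (∫ x in Set.Icc (-1:ℝ) 1, f.eval x * g.eval x ∂μ) +
    ∑ j, η j * ((derivative^[d j] f).eval (c j)) * ((derivative^[d j] g).eval (c j))

/-- The general discrete Sobolev inner product with weights `η j i` for the `i`-th
derivatives, `0 ≤ i ≤ d j`, at each mass point `c j`. -/
def sobInner2 (μ : Measure ℝ) {N : ℕ} (c : Fin N → ℝ) (d : Fin N → ℕ) (η : Fin N → ℕ → ℝ)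
    (f g : Polynomial ℝ) : ℝ :=
  (∫ x in Set.Icc (-1:ℝ) 1, f.eval x * g.eval x ∂μ) +
    ∑ j, ∑ i ∈ Finset.range (d j + 1),
      η j i * ((derivative^[i] f).eval (c j)) * ((derivative^[i] g).eval (c j))

/-- Sequential order for the data of a discrete Sobolev inner product:
`d` is nondecreasing and each `c k` lies outside the convex hull of
`(-1,1) ∪ {c 1, …, c (k-1)}`. -/
def SeqOrdered {N : ℕ} (c : Fin N → ℝ) (d : Fin N → ℕ) : Prop :=
  (∀ i j : Fin N, i ≤ j → d i ≤ d j) ∧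
    ∀ k : Fin N, c k ∉ convexHull ℝ (Set.Ioo (-1:ℝ) 1 ∪ c '' {j : Fin N | j < k})

/-- The polynomial ρ(x) = ∏_{c j < -1} (x - c j)^(d j + 1) · ∏_{c j > 1} (c j - x)^(d j + 1). -/
def rhoPoly {N : ℕ} (c : Fin N → ℝ) (d : Fin N → ℕ) : Polynomial ℝ :=
  (∏ j ∈ Finset.univ.filter (fun j => c j < -1), (X - C (c j)) ^ (d j + 1)) *
    ∏ j ∈ Finset.univ.filter (fun j => (1:ℝ) < c j), (C (c j) - X) ^ (d j + 1)

/-- ν = number of mass points greater than 1. -/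
def nuCount {N : ℕ} (c : Fin N → ℝ) : ℕ :=
  (Finset.univ.filter (fun j : Fin N => (1:ℝ) < c j)).card

/-- μ belongs to the Nevai class M(0,1): supp μ = [-1,1] and the monic orthogonal
polynomials of μ satisfy a three-term recurrence with aₙ → 1/2 and bₙ → 0. -/
def NevaiClass (μ : Measure ℝ) : Prop :=
  μ (Set.Icc (-1:ℝ) 1)ᶜ = 0 ∧
  (∀ x ∈ Set.Icc (-1:ℝ) 1, ∀ ε > 0, 0 < μ (Metric.ball x ε)) ∧
  ∃ (P : ℕ → Polynomial ℝ) (a b : ℕ → ℝ),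
    (∀ n, (P n).Monic) ∧ (∀ n, (P n).natDegree = n) ∧
    (∀ n, ∀ m < n, (∫ x in Set.Icc (-1:ℝ) 1, x ^ m * (P n).eval x ∂μ) = 0) ∧
    P 0 = 1 ∧ P 1 = X - C (b 0) ∧
    (∀ n, P (n + 2) = (X - C (b (n + 1))) * P (n + 1) - C ((a (n + 1)) ^ 2) * P n) ∧
    Tendsto a atTop (nhds (1 / 2)) ∧ Tendsto b atTop (nhds 0)

/-- The segment [-1,1] regarded as a subset of ℂ. -/
def segIcc : Set ℂ := Complex.ofReal '' Set.Icc (-1:ℝ) 1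

/-- Markov-type function: z ↦ ∫ q(x) / (z - x) w(x) dμ(x). -/
def markovHat (μ : Measure ℝ) (w q : Polynomial ℝ) (z : ℂ) : ℂ :=
  ∫ x in Set.Icc (-1:ℝ) 1, ((q.eval x * w.eval x : ℝ) : ℂ) / (z - (x : ℂ)) ∂μ

/-- Associated function: z ↦ ∫ (p(z) - p(x)) / (z - x) · q(x) w(x) dμ(x). -/
def assocFun (μ : Measure ℝ) (w q p : Polynomial ℝ) (z : ℂ) : ℂ :=
  ∫ x in Set.Icc (-1:ℝ) 1,
    ((aeval z p - ((p.eval x : ℝ) : ℂ)) / (z - (x : ℂ))) * ((q.eval x * w.eval x : ℝ) : ℂ) ∂μ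

/-- A function changes sign at `t` if arbitrarily close to `t`, on the left and right,
it takes values of opposite signs. -/
def SignChangeAt (p : Polynomial ℝ) (t : ℝ) : Prop :=
  ∀ δ > 0, ∃ x ∈ Set.Ioo (t - δ) t, ∃ y ∈ Set.Ioo t (t + δ), p.eval x * p.eval y < 0

/-- N₀(f; A): number of zeros of `f` in `A`, counted with multiplicity. -/
def N0 (f : Polynomial ℝ) (A : Set ℝ) : ℕ :=
  (f.roots.filter (fun x => x ∈ A)).card

/-!
Everything happens at the level of the linear functional `L p = ∫ p ρ dμ`. The divided difference
`D = (P - P(z)) / (X - z)` of `P = S_{n+k}` is a polynomial, namely `P /ₘ (X - C z)`, and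
`S_n^{[k]}(z) = L (D Q_{k-1})`. Inserting the recurrence of `Q_{k-1}` and writing
`X - β = (z - β) + (X - z)` gives the two terms of the claim plus
`L ((X - z) D Q_{k-2}) = L (P Q_{k-2}) - P(z) L Q_{k-2}`. Here `L (P Q_{k-2}) = 0`, because
`ρ Q_{k-2}` annihilates the discrete part of the Sobolev product and has degree less than `n + k`,
and `L Q_{k-2} = 0` for `k > 2`. For `k = 2` the surviving term `- P(z) L 1` is exactly
`- α₀² S_{n+2}(z)`.
-/

section LinearFunctional

variable {R : Type*}

theorem map_eq_zero_of_natDegree_lt [Semiring R] {M : Type*} [AddCommMonoid M] [Module R M]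
    (L : R[X] →ₗ[R] M) {n : ℕ} (hL : ∀ m < n, L (X ^ m) = 0) {p : R[X]} (hp : p.natDegree < n) :
    L p = 0 := by
  rw [p.as_sum_range_C_mul_X_pow' hp, map_sum]
  refine Finset.sum_eq_zero fun m hm => ?_
  rw [← smul_eq_C_mul, map_smul, hL m (Finset.mem_range.mp hm), smul_zero]

variable [CommRing R]

theorem map_divByMonic_X_sub_C_mul (L : R[X] →ₗ[R] R) (p q r : R[X]) (a b z : R) :
    L (p /ₘ (X - C z) * ((X - C b) * q - C a * r)) =
      (z - b) * L (p /ₘ (X - C z) * q) - a * L (p /ₘ (X - C z) * r)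
        + (L (p * q) - p.eval z * L q) := by
  have divided_difference : (X - C z) * (p /ₘ (X - C z)) = p - C (p.eval z) := by
    rw [X_sub_C_mul_divByMonic_eq_sub_modByMonic, modByMonic_X_sub_C_eq_C_eval]
  have expansion : p /ₘ (X - C z) * ((X - C b) * q - C a * r) =
      (z - b) • (p /ₘ (X - C z) * q) - a • (p /ₘ (X - C z) * r)
        + (p * q - p.eval z • q) := by
    simp only [smul_eq_C_mul, C_sub]
    linear_combination q * divided_difference
  simp only [expansion, map_add, map_sub, map_smul, smul_eq_mul]

/-- The value at `z` of the `k`-th associated polynomial `P_n^{[k]}` of a sequence `P`, relative to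
a moment functional `L` and a sequence `Q`: `P_n^{[0]} = P_n`, and `P_n^{[k + 1]}(z)` is `L`
applied to `(P_{n+k+1}(z) - P_{n+k+1}(x)) / (z - x) * Q_k(x)`. The divided difference is encoded as
the quotient of `P_{n+k+1}` by `X - z`, so that `z` may be any element of the ring. -/
def assocPolyEval (L : R[X] →ₗ[R] R) (P Q : ℕ → R[X]) : ℕ → ℕ → R → R
  | 0, n, z => (P n).eval z
  | k + 1, n, z => L (P (n + k + 1) /ₘ (X - C z) * Q k)

theorem assocPolyEval_add_two {L : R[X] →ₗ[R] R} {P Q : ℕ → R[X]} {a b : ℕ → R}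
    (hQ0 : Q 0 = 1) (hQ1 : Q 1 = X - C (b 0))
    (hQrec : ∀ m, Q (m + 2) = (X - C (b (m + 1))) * Q (m + 1) - C (a (m + 1)) * Q m)
    (ha0 : a 0 = L 1) (hLQ : ∀ m, L (Q (m + 1)) = 0)
    {k n : ℕ} (hPQ : L (P (n + k + 2) * Q k) = 0) (z : R) :
    assocPolyEval L P Q (k + 2) n z =
      (z - b k) * assocPolyEval L P Q (k + 1) (n + 1) z
        - a k * assocPolyEval L P Q k (n + 2) z := by
  cases k with
  | zero =>
    have expansion := map_divByMonic_X_sub_C_mul L (P (n + 2)) 1 0 0 (b 0) z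
    rw [hQ0] at hPQ
    simp only [add_zero, mul_one, mul_zero, zero_mul, sub_zero] at expansion hPQ
    simp only [assocPolyEval, add_zero, hQ0, hQ1, mul_one, ha0, expansion, hPQ]
    ring
  | succ m =>
    have hleft : n + (m + 1 + 1) + 1 = n + (m + 1) + 2 := by omega
    have hmiddle : n + 1 + (m + 1) + 1 = n + (m + 1) + 2 := by omega
    have hright : n + 2 + m + 1 = n + (m + 1) + 2 := by omega
    simp only [assocPolyEval, hleft, hmiddle, hright]
    rw [hQrec, map_divByMonic_X_sub_C_mul, hPQ, hLQ, mul_zero, sub_zero, add_zero]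

end LinearFunctional

section WeightedIntegral

/-- The moment functional `p ↦ ∫ p w dν` of a measure with a polynomial weight `w`. The measure is
required to have finite moments, which makes the functional linear. -/
def weightedIntegral (ν : Measure ℝ) (hν : ∀ p : ℝ[X], Integrable (fun x => p.eval x) ν)
    (w : ℝ[X]) : ℝ[X] →ₗ[ℝ] ℝ where
  toFun p := ∫ x, p.eval x * w.eval x ∂ν
  map_add' p q := by
    have hint (p : ℝ[X]) : Integrable (fun x => p.eval x * w.eval x) ν := by
      simpa only [eval_mul] using hν (p * w)
    simp only [eval_add, add_mul, integral_add (hint p) (hint q)]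
  map_smul' r p := by
    simp only [eval_smul, smul_eq_mul, mul_assoc, integral_const_mul, RingHom.id_apply]

variable {ν : Measure ℝ} (hν : ∀ p : ℝ[X], Integrable (fun x => p.eval x) ν)

theorem weightedIntegral_apply (w p : ℝ[X]) :
    weightedIntegral ν hν w p = ∫ x, p.eval x * w.eval x ∂ν := rfl

theorem eval_divByMonic_X_sub_C {K : Type*} [Field K] (p : K[X]) {x z : K} (h : x ≠ z) :
    (p /ₘ (X - C z)).eval x = (p.eval z - p.eval x) / (z - x) := by
  have hmul := congrArg (eval x) (X_sub_C_mul_divByMonic_eq_sub_modByMonic p z)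
  simp only [modByMonic_X_sub_C_eq_C_eval, eval_mul, eval_sub, eval_X, eval_C] at hmul
  rw [eq_div_iff (sub_ne_zero.mpr h.symm)]
  linear_combination -hmul

-- At `x = z` the quotient on the right has the junk value `0 / 0 = 0`, whereas the divided
-- difference on the left equals the derivative of `p`; an atom at `z` would see the discrepancy.
theorem weightedIntegral_divByMonic_X_sub_C_mul (w p q : ℝ[X]) {z : ℝ} (hz : ν {z} = 0) :
    weightedIntegral ν hν w (p /ₘ (X - C z) * q) =
      ∫ x, (p.eval z - p.eval x) / (z - x) * (q.eval x * w.eval x) ∂ν := by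
  refine integral_congr_ae ?_
  filter_upwards [compl_mem_ae_iff.mpr hz] with x hx
  rw [eval_mul, eval_divByMonic_X_sub_C p hx, mul_assoc]

theorem integrable_eval_restrict_Icc (μ : Measure ℝ) [IsLocallyFiniteMeasure μ] (a b : ℝ)
    (p : ℝ[X]) : Integrable (fun x => p.eval x) (μ.restrict (Set.Icc a b)) :=
  p.continuous.integrableOn_Icc

end WeightedIntegral

section RhoPoly

variable {N : ℕ} {c : Fin N → ℝ} (d : Fin N → ℕ)

theorem associated_rhoPoly (hc : ∀ j, c j ∉ Set.Icc (-1 : ℝ) 1) :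
    Associated (rhoPoly c d) (∏ j, (X - C (c j)) ^ (d j + 1)) := by
  rw [rhoPoly, Finset.prod_filter, Finset.prod_filter, ← Finset.prod_mul_distrib]
  refine Associated.prod _ _ _ fun j _ => ?_
  rcases lt_or_ge (c j) (-1) with hleft | hleft
  · simp only [if_pos hleft, if_neg (show ¬1 < c j by linarith), mul_one, Associated.refl]
  · have hright : 1 < c j := not_le.mp fun h => hc j ⟨hleft, h⟩
    rw [if_neg hleft.not_gt, if_pos hright, one_mul, ← neg_sub]
    exact (Associated.refl _).neg_left.pow_pow

theorem natDegree_rhoPoly (hc : ∀ j, c j ∉ Set.Icc (-1 : ℝ) 1) :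
    (rhoPoly c d).natDegree = N + ∑ j, d j := by
  rw [natDegree_eq_of_degree_eq (degree_eq_degree_of_associated (associated_rhoPoly d hc)),
    natDegree_prod_of_monic _ _ fun j _ => (monic_X_sub_C _).pow _]
  simp [Finset.sum_add_distrib, add_comm]

theorem X_sub_C_pow_dvd_rhoPoly (hc : ∀ j, c j ∉ Set.Icc (-1 : ℝ) 1) (j : Fin N) :
    (X - C (c j)) ^ (d j + 1) ∣ rhoPoly c d :=
  (Finset.dvd_prod_of_mem (fun j => (X - C (c j)) ^ (d j + 1)) (Finset.mem_univ j)).trans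
    (associated_rhoPoly d hc).dvd'

end RhoPoly

theorem eval_iterate_derivative_eq_zero_of_pow_dvd {R : Type*} [CommRing R] {p : R[X]} {t : R}
    {m i : ℕ} (hp : (X - C t) ^ m ∣ p) (hi : i < m) : (derivative^[i] p).eval t = 0 :=
  dvd_iff_isRoot.mp <| (dvd_pow_self _ (Nat.sub_ne_zero_of_lt hi)).trans
    (pow_sub_dvd_iterate_derivative_of_pow_dvd i hp)

section SobolevOrthogonality

variable {μ : Measure ℝ} {N : ℕ} {c : Fin N → ℝ} {d : Fin N → ℕ} {η : Fin N → ℕ → ℝ}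

theorem sobInner2_mul_rhoPoly (hc : ∀ j, c j ∉ Set.Icc (-1 : ℝ) 1) (q g : ℝ[X]) :
    sobInner2 μ c d η (q * rhoPoly c d) g =
      ∫ x in Set.Icc (-1 : ℝ) 1, (g * q).eval x * (rhoPoly c d).eval x ∂μ := by
  have discrete_part (j : Fin N) (i : ℕ) (hi : i ∈ Finset.range (d j + 1)) :
      (derivative^[i] (q * rhoPoly c d)).eval (c j) = 0 :=
    eval_iterate_derivative_eq_zero_of_pow_dvd ((X_sub_C_pow_dvd_rhoPoly d hc j).mul_left q)
      (Finset.mem_range.mp hi)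
  rw [sobInner2, Finset.sum_eq_zero fun j _ => Finset.sum_eq_zero fun i hi => by
    rw [discrete_part j i hi, mul_zero, zero_mul], add_zero]
  congr with x
  simp only [eval_mul]
  ring

variable [IsLocallyFiniteMeasure μ]

variable (μ c d η) in
/-- The linear functional `f ↦ ⟨f, g⟩` of the discrete Sobolev inner product `sobInner2`. -/
def sobInnerLeft (g : ℝ[X]) : ℝ[X] →ₗ[ℝ] ℝ :=
  weightedIntegral (μ.restrict (Set.Icc (-1) 1)) (integrable_eval_restrict_Icc μ _ _) g +
    ∑ j, ∑ i ∈ Finset.range (d j + 1),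
      (η j i * (derivative^[i] g).eval (c j)) • (leval (c j) ∘ₗ derivative ^ i)

variable (μ c d η) in
theorem sobInnerLeft_apply (f g : ℝ[X]) :
    sobInnerLeft μ c d η g f = sobInner2 μ c d η f g := by
  simp [sobInnerLeft, sobInner2, weightedIntegral_apply, Module.End.pow_apply, mul_right_comm]

theorem weightedIntegral_rhoPoly_mul_eq_zero (hc : ∀ j, c j ∉ Set.Icc (-1 : ℝ) 1)
    {g q : ℝ[X]} {n : ℕ} (hg : ∀ m < n, sobInner2 μ c d η (X ^ m) g = 0)
    (hq : q.natDegree + (N + ∑ j, d j) < n) :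
    weightedIntegral (μ.restrict (Set.Icc (-1) 1)) (integrable_eval_restrict_Icc μ _ _)
      (rhoPoly c d) (g * q) = 0 := by
  rw [weightedIntegral_apply, ← sobInner2_mul_rhoPoly (η := η) hc, ← sobInnerLeft_apply]
  refine map_eq_zero_of_natDegree_lt _ (n := n) (fun m hm => ?_) (natDegree_mul_le.trans_lt ?_)
  · rw [sobInnerLeft_apply, hg m hm]
  · rwa [natDegree_rhoPoly d hc]

end SobolevOrthogonality

theorem statement7_general
    (μ : Measure ℝ) [IsLocallyFiniteMeasure μ]
    {N : ℕ} (c : Fin N → ℝ) (d : Fin N → ℕ)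
    (hc : ∀ j, c j ∉ Set.Icc (-1 : ℝ) 1)
    (η : Fin N → ℕ → ℝ)
    (S : ℕ → ℝ[X])
    (hSorth : ∀ n, ∀ m < n, sobInner2 μ c d η (X ^ m) (S n) = 0)
    (Q : ℕ → ℝ[X])
    (hQdeg : ∀ n, (Q n).natDegree = n)
    (hQorth : ∀ n, ∀ m < n,
      (∫ x in Set.Icc (-1 : ℝ) 1, x ^ m * (Q n).eval x * (rhoPoly c d).eval x ∂μ) = 0)
    (β α : ℕ → ℝ)
    (hQ0 : Q 0 = 1) (hQ1 : Q 1 = X - C (β 0))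
    (hQrec : ∀ m, Q (m + 2) = (X - C (β (m + 1))) * Q (m + 1) - C ((α (m + 1)) ^ 2) * Q m)
    (hα0 : (α 0) ^ 2 = ∫ x in Set.Icc (-1 : ℝ) 1, (rhoPoly c d).eval x ∂μ)
    (Sk : ℕ → ℕ → ℝ → ℝ)
    (hSk0 : ∀ n z, Sk 0 n z = (S n).eval z)
    (hSkS : ∀ k n z, Sk (k + 1) n z =
      ∫ x in Set.Icc (-1 : ℝ) 1,
        (((S (n + k + 1)).eval z - (S (n + k + 1)).eval x) / (z - x)) *
          ((Q k).eval x * (rhoPoly c d).eval x) ∂μ)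
    (k : ℕ) (hk : 2 ≤ k) (n : ℕ) (hn : N + ∑ j, d j ≤ n + 1)
    (z : ℝ) (hz : z ∈ Set.Icc (-1 : ℝ) 1 → μ {z} = 0) :
    Sk k n z =
      (z - β (k - 2)) * Sk (k - 1) (n + 1) z - (α (k - 2)) ^ 2 * Sk (k - 2) (n + 2) z := by
  have hmoments := integrable_eval_restrict_Icc μ (-1) 1
  let L := weightedIntegral _ hmoments (rhoPoly c d)
  have hnotAtom : μ.restrict (Set.Icc (-1) 1) {z} = 0 := by
    rw [Measure.restrict_apply (measurableSet_singleton z)]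
    by_cases h : z ∈ Set.Icc (-1 : ℝ) 1 <;> simp [h, hz]
  have hSk (k n : ℕ) : Sk k n z = assocPolyEval L S Q k n z := by
    cases k with
    | zero => exact hSk0 n z
    | succ k =>
      rw [hSkS, assocPolyEval, weightedIntegral_divByMonic_X_sub_C_mul hmoments _ _ _ hnotAtom]
  obtain ⟨k, rfl⟩ := Nat.exists_eq_add_of_le' hk
  have hSQ : L (S (n + k + 2) * Q k) = 0 :=
    weightedIntegral_rhoPoly_mul_eq_zero hc (hSorth _) (by rw [hQdeg]; omega)
  have hLQ (m : ℕ) : L (Q (m + 1)) = 0 := by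
    simpa only [L, weightedIntegral_apply, pow_zero, one_mul] using hQorth (m + 1) 0 m.succ_pos
  have hL1 : α 0 ^ 2 = L 1 := by simpa [L, weightedIntegral_apply] using hα0
  simp only [hSk]
  exact assocPolyEval_add_two (a := fun m => α m ^ 2) hQ0 hQ1 hQrec hL1 hLQ hSQ z

/-- For `k ≥ 2` and `n ≥ d - 1`,
`S_n^{[k]}(z) = (z - β_{k-2}) S_{n+1}^{[k-1]}(z) - α²_{k-2} S_{n+2}^{[k-2]}(z)`. -/
theorem statement7
    (μ : Measure ℝ) [IsFiniteMeasure μ]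
    (hμsupp : μ (Set.Icc (-1:ℝ) 1)ᶜ = 0)
    (hμinf : ∀ p : Polynomial ℝ, p ≠ 0 → 0 < ∫ x in Set.Icc (-1:ℝ) 1, (p.eval x) ^ 2 ∂μ)
    {N : ℕ} (c : Fin N → ℝ) (d : Fin N → ℕ)
    (hc : ∀ j, c j ∉ Set.Icc (-1:ℝ) 1)
    (η : Fin N → ℕ → ℝ) (hη : ∀ j i, i ≤ d j → 0 ≤ η j i) (hηd : ∀ j, 0 < η j (d j))
    (S : ℕ → Polynomial ℝ)
    (hSmonic : ∀ n, (S n).Monic) (hSdeg : ∀ n, (S n).natDegree = n)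
    (hSorth : ∀ n, ∀ m < n, sobInner2 μ c d η (X ^ m) (S n) = 0)
    (Q : ℕ → Polynomial ℝ)
    (hQmonic : ∀ n, (Q n).Monic) (hQdeg : ∀ n, (Q n).natDegree = n)
    (hQorth : ∀ n, ∀ m < n,
      (∫ x in Set.Icc (-1:ℝ) 1, x ^ m * (Q n).eval x * (rhoPoly c d).eval x ∂μ) = 0)
    (β α : ℕ → ℝ)
    (hQ0 : Q 0 = 1) (hQ1 : Q 1 = X - C (β 0))
    (hQrec : ∀ m, Q (m + 2) = (X - C (β (m + 1))) * Q (m + 1) - C ((α (m + 1)) ^ 2) * Q m)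
    (hα0 : (α 0) ^ 2 = ∫ x in Set.Icc (-1:ℝ) 1, (rhoPoly c d).eval x ∂μ)
    (Sk : ℕ → ℕ → ℝ → ℝ)
    (hSk0 : ∀ n z, Sk 0 n z = (S n).eval z)
    (hSkS : ∀ k n z, Sk (k + 1) n z =
      ∫ x in Set.Icc (-1:ℝ) 1,
        (((S (n + k + 1)).eval z - (S (n + k + 1)).eval x) / (z - x)) *
          ((Q k).eval x * (rhoPoly c d).eval x) ∂μ)
    (k : ℕ) (hk : 2 ≤ k) (n : ℕ) (hn : N + ∑ j, d j ≤ n + 1) :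
    ∀ z : ℝ, z ∉ Set.Icc (-1:ℝ) 1 →
      Sk k n z =
        (z - β (k - 2)) * Sk (k - 1) (n + 1) z - (α (k - 2)) ^ 2 * Sk (k - 2) (n + 2) z := by
  intro z hz
  exact statement7_general μ c d hc η S hSorth Q hQdeg hQorth β α hQ0 hQ1 hQrec hα0 Sk hSk0 hSkS
    k hk n hn z fun h => absurd h hz

end
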